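/- Let n ≥ 1, let U ⊆ ℝⁿ be open, and let V = (V^i) : U → ℝⁿ and w = (w^i_k) : U → Matₙ(ℝ) be smooth, with V^i_j := ∂V^i/∂u^j, V^i_{jk} := ∂²V^i/∂u^j∂u^k, w^i_{k,l} := ∂w^i_k/∂u^l. Assume the commuting-flow conditions hold on U: (a) −Σ_k w^i_{h,k}V^k_m − Σ_k w^i_{m,k}V^k_h − 2Σ_k w^i_k V^k_{mh} + Σ_k V^i_k w^k_{m,h} + Σ_k V^i_k w^k_{h,m} = 0 for all i,h,m; (b) −Σ_k w^i_k V^k_h + Σ_k V^i_k w^k_h = 0 for all i,h. Let Ω ⊆ ℝ² be open with coordinates (x,t) and let b : Ω → ℝⁿ, p : Ω → ℝⁿ be smooth with b_x taking values in U, satisfying the adjoint (cotangent) system: b^i_t = V^i(b_x) and p_{k,t} = Σ_{i,h} V^i_{kh}(b_x) b^h_{xx} p_i + Σ_i V^i_k(b_x) p_{i,x}. Then the conservation law ∂_t[Σ_{i,k} w^i_k(b_x) b^k_{xx} p_i] = ∂_x[Σ_{i,j,k} V^i_j(b_x) w^j_k(b_x) b^k_{xx} p_i] holds on Ω. -/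

import Mathlib

/-- Partial derivative with respect to the first coordinate `x` of `ℝ × ℝ`. -/
noncomputable def pdx (f : ℝ × ℝ → ℝ) (p : ℝ × ℝ) : ℝ := fderiv ℝ f p (1, 0)

/-- Partial derivative with respect to the second coordinate `t` of `ℝ × ℝ`. -/
noncomputable def pdt (f : ℝ × ℝ → ℝ) (p : ℝ × ℝ) : ℝ := fderiv ℝ f p (0, 1)

/-- Partial derivative in direction `k` for functions on `ℝⁿ`. -/
noncomputable def pd {n : ℕ} (k : Fin n) (f : (Fin n → ℝ) → ℝ) (x : Fin n → ℝ) : ℝ :=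
  fderiv ℝ f x (Pi.single k 1)

/-- First `x`-derivative `b_x` of a curve of potential coordinates. -/
noncomputable def bX {n : ℕ} (b : ℝ × ℝ → (Fin n → ℝ)) (z : ℝ × ℝ) : Fin n → ℝ :=
  fun i => pdx (fun s => b s i) z

/-- Second `x`-derivative `b^k_{xx}`. -/
noncomputable def bXX {n : ℕ} (b : ℝ × ℝ → (Fin n → ℝ)) (k : Fin n) (z : ℝ × ℝ) : ℝ :=
  pdx (pdx (fun s => b s k)) z

theorem aux_alg {n : ℕ} (w A : Fin n → Fin n → ℝ) (W B : Fin n → Fin n → Fin n → ℝ)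
    (u X P Q : Fin n → ℝ)
    (hA : ∀ i h m : Fin n,
      -(∑ k, W i h k * A k m) - ∑ k, W i m k * A k h - 2 * ∑ k, w i k * B k m h
        + ∑ k, A i k * W k m h + ∑ k, A i k * W k h m = 0)
    (hB : ∀ i h : Fin n, -(∑ k, w i k * A k h) + ∑ k, A i k * w k h = 0) :
    ∑ i, ∑ k, (((∑ l, W i k l * ∑ m, A l m * u m) * u k
        + w i k * ∑ m, ((∑ h, B k m h * u h) * u m + A k m * X m)) * P i
        + w i k * u k * (∑ j, ∑ h, B j i h * u h * P j + ∑ j, A j i * Q j))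
      = ∑ i, ∑ j, ∑ k, ((((∑ l, B i j l * u l) * w j k + A i j * ∑ l, W j k l * u l) * u k
          + A i j * w j k * X k) * P i + A i j * w j k * u k * Q i) := by
  have hp1 : ∑ i, ∑ k, w i k * u k * (∑ j, ∑ h, B j i h * u h * P j)
      = ∑ i, ∑ j, ∑ k, (∑ l, B i j l * u l) * w j k * u k * P i := by
    have : ∀ i, ∑ k, w i k * u k * (∑ j, ∑ h, B j i h * u h * P j)
        = ∑ j, ∑ k, (∑ l, B j i l * u l) * w i k * u k * P j := by
      intro i
      rw [Finset.sum_comm (f := fun j k => (∑ l, B j i l * u l) * w i k * u k * P j)]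
      refine Finset.sum_congr rfl fun k _ => ?_
      rw [Finset.mul_sum]
      refine Finset.sum_congr rfl fun j _ => ?_
      rw [← Finset.sum_mul]; ring
    simp_rw [this]
    exact Finset.sum_comm
  have hp2 : ∑ i, ∑ k, w i k * u k * (∑ j, A j i * Q j)
      = ∑ i, ∑ j, ∑ k, A i j * w j k * u k * Q i := by
    have : ∀ i, ∑ k, w i k * u k * (∑ j, A j i * Q j)
        = ∑ j, ∑ k, A j i * w i k * u k * Q j := by
      intro i
      rw [Finset.sum_comm]
      refine Finset.sum_congr rfl fun k _ => ?_
      rw [Finset.mul_sum]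
      refine Finset.sum_congr rfl fun j _ => ?_
      ring
    simp_rw [this]
    exact Finset.sum_comm
  have hX : ∀ i, ∑ k, w i k * ∑ m, A k m * X m = ∑ j, ∑ k, A i j * w j k * X k := by
    intro i
    have h1 : ∑ k, w i k * ∑ m, A k m * X m = ∑ m, (∑ k, w i k * A k m) * X m := by
      simp_rw [Finset.mul_sum, Finset.sum_mul]
      rw [Finset.sum_comm]
      simp only [mul_assoc]
    rw [h1, Finset.sum_comm]
    refine Finset.sum_congr rfl fun m _ => ?_
    rw [← Finset.sum_mul]
    congr 1
    linarith [hB i m]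
  have hU : ∀ i, ∑ k, ((∑ l, W i k l * ∑ m, A l m * u m) * u k
        + w i k * ∑ m, (∑ h, B k m h * u h) * u m)
      = ∑ j, ∑ k, A i j * (∑ l, W j k l * u l) * u k := by
    intro i
    have e1 : ∑ k, (∑ l, W i k l * ∑ m, A l m * u m) * u k
        = ∑ h, ∑ m, (∑ k, W i h k * A k m) * (u h * u m) := by
      refine Finset.sum_congr rfl fun h _ => ?_
      simp_rw [Finset.mul_sum, Finset.sum_mul]
      rw [Finset.sum_comm]
      refine Finset.sum_congr rfl fun m _ => Finset.sum_congr rfl fun k _ => ?_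
      ring
    have e1' : ∑ k, (∑ l, W i k l * ∑ m, A l m * u m) * u k
        = ∑ h, ∑ m, (∑ k, W i m k * A k h) * (u h * u m) := by
      rw [e1, Finset.sum_comm]
      simp only [mul_comm (u _) (u _)]
    have e2 : ∑ k, w i k * ∑ m, (∑ h, B k m h * u h) * u m
        = ∑ h, ∑ m, (∑ k, w i k * B k m h) * (u h * u m) := by
      simp_rw [Finset.mul_sum, Finset.sum_mul, Finset.mul_sum]
      rw [Finset.sum_comm' (s' := fun _ => Finset.univ) (t' := Finset.univ) (by simp)]
      rw [Finset.sum_comm]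
      rw [Finset.sum_comm]
      conv_lhs => enter [2, m]; rw [Finset.sum_comm]
      rw [Finset.sum_comm]
      refine Finset.sum_congr rfl fun m _ => Finset.sum_congr rfl fun k _ => 
        Finset.sum_congr rfl fun k _ => ?_
      ring
    have e3 : ∑ j, ∑ k, A i j * (∑ l, W j k l * u l) * u k
        = ∑ h, ∑ m, (∑ k, A i k * W k h m) * (u h * u m) := by
      simp_rw [Finset.mul_sum, Finset.sum_mul]
      rw [Finset.sum_comm]
      refine Finset.sum_congr rfl fun h _ => ?_
      rw [Finset.sum_comm]
      refine Finset.sum_congr rfl fun m _ => Finset.sum_congr rfl fun k _ => ?_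
      ring
    have e3' : ∑ j, ∑ k, A i j * (∑ l, W j k l * u l) * u k
        = ∑ h, ∑ m, (∑ k, A i k * W k m h) * (u h * u m) := by
      rw [e3, Finset.sum_comm]
      simp only [mul_comm (u _) (u _)]
    have key : ∑ h, ∑ m, (-(∑ k, W i h k * A k m) - ∑ k, W i m k * A k h
        - 2 * ∑ k, w i k * B k m h
        + ∑ k, A i k * W k m h + ∑ k, A i k * W k h m) * (u h * u m) = 0 := by
      simp only [hA, zero_mul, Finset.sum_const_zero]
    simp only [add_mul, sub_mul, neg_mul, mul_assoc (2:ℝ), Finset.sum_add_distrib,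
      Finset.sum_sub_distrib, Finset.sum_neg_distrib] at key
    simp only [← Finset.mul_sum (a := (2:ℝ)) ] at key
    rw [Finset.sum_add_distrib]
    rw [← e1, ← e1', ← e2, ← e3, ← e3'] at key
    linarith
  have L : ∀ i, ∑ k, (((∑ l, W i k l * ∑ m, A l m * u m) * u k
        + w i k * ∑ m, ((∑ h, B k m h * u h) * u m + A k m * X m)) * P i)
      = (∑ j, ∑ k, A i j * (∑ l, W j k l * u l) * u k + ∑ j, ∑ k, A i j * w j k * X k) * P i := by
    intro i
    rw [← hU, ← hX, ← Finset.sum_mul, ← Finset.sum_add_distrib]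
    congr 1
    refine Finset.sum_congr rfl fun k _ => ?_
    rw [Finset.sum_add_distrib]; ring
  have R : ∑ i, ∑ j, ∑ k, ((((∑ l, B i j l * u l) * w j k + A i j * ∑ l, W j k l * u l) * u k
          + A i j * w j k * X k) * P i + A i j * w j k * u k * Q i)
      = ∑ i, (∑ j, ∑ k, A i j * (∑ l, W j k l * u l) * u k + ∑ j, ∑ k, A i j * w j k * X k) * P i
       + ∑ i, ∑ j, ∑ k, (∑ l, B i j l * u l) * w j k * u k * P i
       + ∑ i, ∑ j, ∑ k, A i j * w j k * u k * Q i := by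
    rw [← Finset.sum_add_distrib, ← Finset.sum_add_distrib]
    refine Finset.sum_congr rfl fun i _ => ?_
    rw [← Finset.sum_add_distrib, Finset.sum_mul, ← Finset.sum_add_distrib,
      ← Finset.sum_add_distrib]
    refine Finset.sum_congr rfl fun j _ => ?_
    rw [← Finset.sum_add_distrib, Finset.sum_mul, ← Finset.sum_add_distrib,
      ← Finset.sum_add_distrib]
    refine Finset.sum_congr rfl fun k _ => ?_
    ring
  rw [R, ← hp1, ← hp2, ← Finset.sum_congr rfl fun i _ => L i]
  simp only [mul_add (w _ _ * u _)]
  simp only [← Finset.sum_add_distrib, add_assoc]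

theorem aux_mul {v : ℝ × ℝ} {f g : ℝ × ℝ → ℝ} {z : ℝ × ℝ} (hf : DifferentiableAt ℝ f z)
    (hg : DifferentiableAt ℝ g z) :
    fderiv ℝ (fun s => f s * g s) z v = fderiv ℝ f z v * g z + f z * fderiv ℝ g z v := by
  rw [fderiv_fun_mul hf hg]
  simp; ring

theorem aux_sum {n : ℕ} {v : ℝ × ℝ} {f : Fin n → ℝ × ℝ → ℝ} {z : ℝ × ℝ}
    (hf : ∀ i, DifferentiableAt ℝ (f i) z) :
    fderiv ℝ (fun s => ∑ i, f i s) z v = ∑ i, fderiv ℝ (f i) z v := by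
  rw [fderiv_fun_sum fun i _ => hf i]
  simp

theorem aux_chain {n : ℕ} {v : ℝ × ℝ} {g : (Fin n → ℝ) → ℝ} {c : ℝ × ℝ → Fin n → ℝ} {z : ℝ × ℝ}
    (hg : DifferentiableAt ℝ g (c z)) (hc : ∀ i, DifferentiableAt ℝ (fun s => c s i) z) :
    fderiv ℝ (fun s => g (c s)) z v = ∑ k, pd k g (c z) * fderiv ℝ (fun s => c s k) z v := by
  have hc' : DifferentiableAt ℝ c z := differentiableAt_pi.2 hc
  have h := fderiv_comp z hg hc'
  have h2 : (fun s => g (c s)) = g ∘ c := rfl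
  rw [h2, h, ContinuousLinearMap.comp_apply]
  have h3 : fderiv ℝ c z v = ∑ k, fderiv ℝ (fun s => c s k) z v • (Pi.single k 1 : Fin n → ℝ) := by
    ext j
    rw [fderiv_pi hc]
    simp [Finset.sum_apply, Pi.single_apply]
  rw [h3, map_sum]
  refine Finset.sum_congr rfl fun k _ => ?_
  rw [map_smul, smul_eq_mul, mul_comm]; rfl

theorem aux_smooth {E : Type*} [NormedAddCommGroup E] [NormedSpace ℝ E] {f : E → ℝ} {O : Set E}
    (hO : IsOpen O) (hf : ContDiffOn ℝ (⊤ : ℕ∞) f O) (v : E) :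
    ContDiffOn ℝ (⊤ : ℕ∞) (fun z => fderiv ℝ f z v) O :=
  (hf.fderiv_of_isOpen hO (by simp)).clm_apply contDiffOn_const

theorem aux_comm {f : ℝ × ℝ → ℝ} {O : Set (ℝ × ℝ)}
    (hO : IsOpen O) (hf : ContDiffOn ℝ (⊤ : ℕ∞) f O) {z : ℝ × ℝ} (hz : z ∈ O) (v v' : ℝ × ℝ) :
    fderiv ℝ (fun s => fderiv ℝ f s v) z v' = fderiv ℝ (fun s => fderiv ℝ f s v') z v := by
  have hd : DifferentiableAt ℝ (fderiv ℝ f) z :=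
    ((hf.fderiv_of_isOpen (m := (⊤ : ℕ∞)) hO (by simp)).contDiffAt (hO.mem_nhds hz)).differentiableAt
      (by simp)
  have hs : IsSymmSndFDerivAt ℝ f z :=
    (hf.contDiffAt (hO.mem_nhds hz)).isSymmSndFDerivAt
      (by
        rw [minSmoothness_of_isRCLikeNormedField]
        exact WithTop.coe_le_coe.2 (le_top : (2 : ℕ∞) ≤ ⊤))
  rw [fderiv_clm_apply hd (differentiableAt_const _), fderiv_clm_apply hd (differentiableAt_const _)]
  simpa using hs.eq v' v

theorem aux_congr {f g : ℝ × ℝ → ℝ} {O : Set (ℝ × ℝ)} (hO : IsOpen O) (h : ∀ z ∈ O, f z = g z)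
    {z : ℝ × ℝ} (hz : z ∈ O) (v : ℝ × ℝ) : fderiv ℝ f z v = fderiv ℝ g z v := by
  rw [Filter.EventuallyEq.fderiv_eq (Filter.eventuallyEq_of_mem (hO.mem_nhds hz) h)]

/-- if `w^i_k(u)` is a hydrodynamic-type symmetry of `b_t = V(b_x)`
(conditions (a) and (b)), then on any solution `(b, p)` of the adjoint (cotangent)
system the conservation law
`∂_t[w^i_k(b_x) b^k_{xx} p_i] = ∂_x[V^i_j(b_x) w^j_k(b_x) b^k_{xx} p_i]` holds. -/
theorem statement12 (n : ℕ) (hn : 1 ≤ n) (U : Set (Fin n → ℝ)) (hU : IsOpen U)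
    (V : Fin n → (Fin n → ℝ) → ℝ) (hV : ∀ i, ContDiffOn ℝ (⊤ : ℕ∞) (V i) U)
    (w : Fin n → Fin n → (Fin n → ℝ) → ℝ) (hw : ∀ i k, ContDiffOn ℝ (⊤ : ℕ∞) (w i k) U)
    (hcommA : ∀ x ∈ U, ∀ i h m : Fin n,
      -(∑ k, pd k (w i h) x * pd m (V k) x)
        - ∑ k, pd k (w i m) x * pd h (V k) x
        - 2 * ∑ k, w i k x * pd h (fun y => pd m (V k) y) x
        + ∑ k, pd k (V i) x * pd h (w k m) x
        + ∑ k, pd k (V i) x * pd m (w k h) x = 0)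
    (hcommB : ∀ x ∈ U, ∀ i h : Fin n,
      -(∑ k, w i k x * pd h (V k) x) + ∑ k, pd k (V i) x * w k h x = 0)
    (Ω : Set (ℝ × ℝ)) (hΩ : IsOpen Ω)
    (b p : ℝ × ℝ → (Fin n → ℝ))
    (hb : ContDiffOn ℝ (⊤ : ℕ∞) b Ω) (hp : ContDiffOn ℝ (⊤ : ℕ∞) p Ω)
    (hbU : ∀ z ∈ Ω, bX b z ∈ U)
    (heq : ∀ z ∈ Ω, ∀ i : Fin n, pdt (fun s => b s i) z = V i (bX b z))
    (hadj : ∀ z ∈ Ω, ∀ k : Fin n,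
      pdt (fun s => p s k) z
        = ∑ i, ∑ h, pd h (fun y => pd k (V i) y) (bX b z) * bXX b h z * p z i
          + ∑ i, pd k (V i) (bX b z) * pdx (fun s => p s i) z) :
    ∀ z ∈ Ω,
      pdt (fun s => ∑ i, ∑ k, w i k (bX b s) * bXX b k s * p s i) z
        = pdx (fun s => ∑ i, ∑ j, ∑ k,
            pd j (V i) (bX b s) * w j k (bX b s) * bXX b k s * p s i) z := by
  have hbi : ∀ i, ContDiffOn ℝ (⊤ : ℕ∞) (fun s => b s i) Ω := fun i => contDiffOn_pi.1 hb i
  have hpi : ∀ i, ContDiffOn ℝ (⊤ : ℕ∞) (fun s => p s i) Ω := fun i => contDiffOn_pi.1 hp i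
  have hu : ∀ i, ContDiffOn ℝ (⊤ : ℕ∞) (fun s => bX b s i) Ω := fun i =>
    aux_smooth hΩ (hbi i) (1, 0)
  have huv : ContDiffOn ℝ (⊤ : ℕ∞) (bX b) Ω := contDiffOn_pi.2 hu
  have hux : ∀ i, ContDiffOn ℝ (⊤ : ℕ∞) (bXX b i) Ω := fun i => aux_smooth hΩ (hu i) (1, 0)
  have hVd : ∀ i j, ContDiffOn ℝ (⊤ : ℕ∞) (pd j (V i)) U := fun i j => aux_smooth hU (hV i) _
  have toD : ∀ f : ℝ × ℝ → ℝ, ContDiffOn ℝ (⊤ : ℕ∞) f Ω → ∀ z ∈ Ω, DifferentiableAt ℝ f z :=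
    fun f hf z hz => (hf.contDiffAt (hΩ.mem_nhds hz)).differentiableAt (by simp)
  have toDU : ∀ f : (Fin n → ℝ) → ℝ, ContDiffOn ℝ (⊤ : ℕ∞) f U → ∀ z ∈ U, DifferentiableAt ℝ f z :=
    fun f hf z hz => (hf.contDiffAt (hU.mem_nhds hz)).differentiableAt (by simp)
  have hcomp : ∀ f : (Fin n → ℝ) → ℝ, ContDiffOn ℝ (⊤ : ℕ∞) f U →
      ContDiffOn ℝ (⊤ : ℕ∞) (fun s => f (bX b s)) Ω := fun f hf => hf.comp huv hbU
  have chain : ∀ f : (Fin n → ℝ) → ℝ, ContDiffOn ℝ (⊤ : ℕ∞) f U → ∀ z ∈ Ω, ∀ v : ℝ × ℝ,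
      fderiv ℝ (fun s => f (bX b s)) z v
        = ∑ k, pd k f (bX b z) * fderiv ℝ (fun s => bX b s k) z v := fun f hf z hz v =>
    aux_chain (toDU f hf _ (hbU z hz)) fun i => toD _ (hu i) z hz
  -- `u_t`
  have hut : ∀ z ∈ Ω, ∀ k, fderiv ℝ (fun s => bX b s k) z (0, 1)
      = ∑ m, pd m (V k) (bX b z) * bXX b m z := by
    intro z hz k
    have h1 : fderiv ℝ (fun s => bX b s k) z (0, 1)
        = fderiv ℝ (fun s => fderiv ℝ (fun s => b s k) s (0, 1)) z (1, 0) :=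
      aux_comm hΩ (hbi k) hz _ _
    have h2 : fderiv ℝ (fun s => fderiv ℝ (fun s => b s k) s (0, 1)) z (1, 0)
        = fderiv ℝ (fun s => V k (bX b s)) z (1, 0) :=
      aux_congr hΩ (fun s hs => heq s hs k) hz _
    rw [h1, h2, chain _ (hV k) z hz]
    rfl
  -- `u_{xt}`
  have huxt : ∀ z ∈ Ω, ∀ k, fderiv ℝ (bXX b k) z (0, 1)
      = ∑ m, ((∑ h, pd h (pd m (V k)) (bX b z) * bXX b h z) * bXX b m z
          + pd m (V k) (bX b z) * fderiv ℝ (bXX b m) z (1, 0)) := by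
    intro z hz k
    have h1 : fderiv ℝ (bXX b k) z (0, 1)
        = fderiv ℝ (fun s => fderiv ℝ (fun s => bX b s k) s (0, 1)) z (1, 0) :=
      aux_comm hΩ (hu k) hz _ _
    rw [h1, aux_congr hΩ (fun s hs => hut s hs k) hz, aux_sum fun m =>
      (toD _ (hcomp _ (hVd k m)) z hz).fun_mul (toD _ (hux m) z hz)]
    refine Finset.sum_congr rfl fun m _ => ?_
    rw [aux_mul (toD _ (hcomp _ (hVd k m)) z hz) (toD _ (hux m) z hz), chain _ (hVd k m) z hz]
    rfl
  intro z hz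
  have dw := fun i k => toD _ (hcomp _ (hw i k)) z hz
  have dV := fun i k => toD _ (hcomp _ (hVd i k)) z hz
  have dx := fun i => toD _ (hux i) z hz
  have dp := fun i => toD _ (hpi i) z hz
  have hL : pdt (fun s => ∑ i, ∑ k, w i k (bX b s) * bXX b k s * p s i) z
      = ∑ i, ∑ k, (((∑ l, pd l (w i k) (bX b z) * ∑ m, pd m (V l) (bX b z) * bXX b m z) * bXX b k z
        + w i k (bX b z) * ∑ m, ((∑ h, pd h (pd m (V k)) (bX b z) * bXX b h z) * bXX b m z
          + pd m (V k) (bX b z) * fderiv ℝ (bXX b m) z (1, 0))) * p z i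
        + w i k (bX b z) * bXX b k z *
          (∑ j, ∑ h, pd h (pd i (V j)) (bX b z) * bXX b h z * p z j
            + ∑ j, pd i (V j) (bX b z) * pdx (fun s => p s j) z)) := by
    unfold pdt
    rw [aux_sum fun i => DifferentiableAt.fun_sum (u := Finset.univ) fun k _ => ((dw i k).fun_mul (dx k)).fun_mul (dp i)]
    refine Finset.sum_congr rfl fun i _ => ?_
    rw [aux_sum fun k => ((dw i k).fun_mul (dx k)).fun_mul (dp i)]
    refine Finset.sum_congr rfl fun k _ => ?_
    have hpt : fderiv ℝ (fun s => p s i) z (0, 1) = _ := hadj z hz i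
    rw [aux_mul ((dw i k).fun_mul (dx k)) (dp i), aux_mul (dw i k) (dx k), chain _ (hw i k) z hz,
      huxt z hz, hpt]
    simp only [hut z hz]
  have hR : pdx (fun s => ∑ i, ∑ j, ∑ k,
            pd j (V i) (bX b s) * w j k (bX b s) * bXX b k s * p s i) z
      = ∑ i, ∑ j, ∑ k, ((((∑ l, pd l (pd j (V i)) (bX b z) * bXX b l z) * w j k (bX b z)
          + pd j (V i) (bX b z) * ∑ l, pd l (w j k) (bX b z) * bXX b l z) * bXX b k z
          + pd j (V i) (bX b z) * w j k (bX b z) * fderiv ℝ (bXX b k) z (1, 0)) * p z i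
          + pd j (V i) (bX b z) * w j k (bX b z) * bXX b k z * pdx (fun s => p s i) z) := by
    have d := fun i j k => (((dV i j).fun_mul (dw j k)).fun_mul (dx k)).fun_mul (dp i)
    unfold pdx
    rw [aux_sum fun i => DifferentiableAt.fun_sum (u := Finset.univ) fun j _ => DifferentiableAt.fun_sum (u := Finset.univ) fun k _ =>
      d i j k]
    refine Finset.sum_congr rfl fun i _ => ?_
    rw [aux_sum fun j => DifferentiableAt.fun_sum (u := Finset.univ) fun k _ => d i j k]
    refine Finset.sum_congr rfl fun j _ => ?_
    rw [aux_sum fun k => d i j k]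
    refine Finset.sum_congr rfl fun k _ => ?_
    rw [aux_mul (((dV i j).fun_mul (dw j k)).fun_mul (dx k)) (dp i),
      aux_mul ((dV i j).fun_mul (dw j k)) (dx k), aux_mul (dV i j) (dw j k),
      chain _ (hw j k) z hz, chain _ (hVd i j) z hz]
    rfl
  rw [hL, hR]
  exact aux_alg (fun i k => w i k (bX b z)) (fun i j => pd j (V i) (bX b z))
    (fun i k l => pd l (w i k) (bX b z)) (fun i j l => pd l (pd j (V i)) (bX b z))
    (fun k => bXX b k z) (fun k => fderiv ℝ (bXX b k) z (1, 0)) (p z)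
    (fun i => pdx (fun s => p s i) z) (fun i h m => hcommA _ (hbU z hz) i h m)
    (fun i h => hcommB _ (hbU z hz) i h)
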